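/- Let U be an N×N complex matrix and let I denote the N×N identity. Define the 2N×2N matrix U_H = (Had⊗I) · fromBlocks(U†, 0, 0, I) · fromBlocks(i·I, 0, 0, −i·I) · fromBlocks(I, 0, 0, U) · (Had⊗I), where Had = (1/√2)·[[1, 1], [1, −1]] is the Hadamard matrix and fromBlocks(A, B, C, D) denotes the 2×2 block matrix with blocks A, B, C, D. Then U_H = (1/2)·fromBlocks(i(U† − U), i(U + U†), i(U + U†), i(U† − U)); in particular the top-left N×N block of U_H equals H := (i/2)(U† − U), so U_H is a one-qubit block encoding of H. Moreover, if U is unitary and Uψ = e^{iφ}·ψ for some vector ψ and real φ, then Hψ = sin(φ)·ψ. -/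

import Mathlib

/-!
The three middle factors multiply to the block-diagonal matrix with blocks `iU†` and `-iU`.
Conjugating `diag(A, D)` by `Had ⊗ I` gives diagonal blocks `(A + D)/2` and off-diagonal blocks
`(A - D)/2`, which is the claimed formula. If `U` is unitary and `Uψ = e^{iφ}ψ`, then
`U†ψ = e^{-iφ}ψ`, so `Hψ = (i/2)(e^{-iφ} - e^{iφ})ψ = sin(φ)ψ`.
-/

open Matrix

/-- The tensor product `A ⊗ I_N` of a 2×2 matrix with the N×N identity,
realised as a 2×2 block matrix. -/
noncomputable def tensorId {N : ℕ} (A : Matrix (Fin 2) (Fin 2) ℂ) :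
    Matrix (Fin N ⊕ Fin N) (Fin N ⊕ Fin N) ℂ :=
  Matrix.fromBlocks (A 0 0 • 1) (A 0 1 • 1) (A 1 0 • 1) (A 1 1 • 1)

/-- Let U be an N×N complex matrix and define
`U_H = (Had⊗I)·fromBlocks(U†,0,0,I)·fromBlocks(iI,0,0,−iI)·fromBlocks(I,0,0,U)·(Had⊗I)`.
Then `U_H = (1/2)·fromBlocks(i(U†−U), i(U+U†), i(U+U†), i(U†−U))`; in
particular its top-left block is `H = (i/2)(U†−U)`, so `U_H` is a one-qubit
block encoding of `H`.  Moreover, if U is unitary and `Uψ = e^{iφ}ψ`, then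
`Hψ = sin(φ)·ψ`. -/
theorem block_encoding_of_sin (N : ℕ) (U : Matrix (Fin N) (Fin N) ℂ)
    (Had : Matrix (Fin 2) (Fin 2) ℂ)
    (hHad : Had = ((Real.sqrt 2 : ℂ))⁻¹ • !![1, 1; 1, -1])
    (UH : Matrix (Fin N ⊕ Fin N) (Fin N ⊕ Fin N) ℂ)
    (hUH : UH = tensorId Had * Matrix.fromBlocks Uᴴ 0 0 1 *
      Matrix.fromBlocks (Complex.I • (1 : Matrix (Fin N) (Fin N) ℂ)) 0 0
        ((-Complex.I) • (1 : Matrix (Fin N) (Fin N) ℂ)) *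
      Matrix.fromBlocks 1 0 0 U * tensorId Had) :
    UH = (1 / 2 : ℂ) • Matrix.fromBlocks (Complex.I • (Uᴴ - U)) (Complex.I • (U + Uᴴ))
        (Complex.I • (U + Uᴴ)) (Complex.I • (Uᴴ - U)) ∧
      UH.toBlocks₁₁ = (Complex.I / 2) • (Uᴴ - U) ∧
      (U ∈ Matrix.unitaryGroup (Fin N) ℂ →
        ∀ (ψ : Fin N → ℂ) (φ : ℝ), U.mulVec ψ = Complex.exp ((φ : ℝ) * Complex.I) • ψ →
          ((Complex.I / 2) • (Uᴴ - U)).mulVec ψ = (Real.sin φ : ℂ) • ψ) := by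
  have hs : ((Real.sqrt 2 : ℂ))⁻¹ * ((Real.sqrt 2 : ℂ))⁻¹ = 1 / 2 := by
    rw [← mul_inv, ← Complex.ofReal_mul, Real.mul_self_sqrt (by norm_num)]
    norm_num
  have key : UH = (1 / 2 : ℂ) • Matrix.fromBlocks (Complex.I • (Uᴴ - U))
      (Complex.I • (U + Uᴴ)) (Complex.I • (U + Uᴴ)) (Complex.I • (Uᴴ - U)) := by
    subst hUH hHad
    rw [← hs]
    simp only [tensorId, Matrix.fromBlocks_multiply, Matrix.fromBlocks_smul]
    congr 1 <;> simp [smul_smul] <;> module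
  refine ⟨key, ?_, fun hU ψ φ h => ?_⟩
  · rw [key, Matrix.fromBlocks_smul, Matrix.toBlocks_fromBlocks₁₁, smul_smul]
    congr 1
    ring
  · have hUU : Uᴴ * U = 1 := Matrix.mem_unitaryGroup_iff'.mp hU
    -- Unitarity turns the eigenvalue equation for `U` into one for `U†`, with inverse eigenvalue.
    have hstar : Uᴴ.mulVec ψ = Complex.exp (-(φ : ℂ) * Complex.I) • ψ := by
      have h1 : ψ = Complex.exp ((φ : ℝ) * Complex.I) • Uᴴ.mulVec ψ := by
        rw [← Matrix.mulVec_smul, ← h, Matrix.mulVec_mulVec, hUU, Matrix.one_mulVec]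
      conv_rhs => rw [h1]
      rw [smul_smul, ← Complex.exp_add, neg_mul, neg_add_cancel, Complex.exp_zero, one_smul]
    rw [Matrix.smul_mulVec, Matrix.sub_mulVec, hstar, h, ← sub_smul, smul_smul,
      Complex.ofReal_sin, Complex.sin]
    congr 1
    ring
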